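/- arXiv:1610.05617 — 2 statements merged into one kernel-verified Lean document; each statement's English description precedes it below -/
import Mathlib

section
/- Under the generic-association setup described in the context, suppose the Gaussian-approximation hypothesis |P((I−μ)/σ ≤ x) − Ψ(x)| ≤ Ξ·c(x) holds for all x ∈ ℝ. For γ ∈ (0,1) define the outage capacity C_o(γ) = sup{τ ≥ 0 : P(log(1+SINR) < τ) ≤ γ}, with the supremum taken in [0,∞] and sup ∅ = 0. Then C_o(γ) ≤ sup{τ ≥ 0 : 1 − E[V⁺(H,τ)] ≤ γ} and C_o(γ) ≥ sup{τ ≥ 0 : 1 − E[V⁻(H,τ)] ≤ γ}. -/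
open MeasureTheory ProbabilityTheory
open scoped ProbabilityTheory ENNReal

/-- The standard normal cumulative distribution function. -/
noncomputable def stdNormalCDF (x : ℝ) : ℝ :=
  (Real.sqrt (2 * Real.pi))⁻¹ * ∫ t in Set.Iic x, Real.exp (-(t ^ 2) / 2)

/-- The Berry–Esseen multiplicative function `c(x) = min{0.4785, 31.935/(1+|x|³)}`. -/
noncomputable def berryC (x : ℝ) : ℝ := min 0.4785 (31.935 / (1 + |x| ^ 3))

/-!
For `τ > 0` the rate `log (1 + SINR)` reaches `τ` exactly when the interference does not exceed a
margin determined by the fading coefficient. Independence turns the probability of this event into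
the mean, over the fading, of the interference CDF at the margin, so any bounds on that CDF bound
the outage probability, and the capacity is antitone in the outage probability. The fading
threshold in `V⁺` costs nothing: below it the margin is negative and the CDF vanishes there. The
rate `τ = 0` never affects a supremum taken in `[0,∞]`.
-/

lemma stdNormalCDF_eq_cdf_gaussianReal (x : ℝ) : stdNormalCDF x = cdf (gaussianReal 0 1) x := by
  rw [cdf_eq_real, Measure.real, gaussianReal_apply_eq_integral 0 one_ne_zero,
    ENNReal.toReal_ofReal (integral_nonneg fun t ↦ gaussianPDFReal_nonneg 0 1 t)]
  simp only [stdNormalCDF, gaussianPDFReal, NNReal.coe_one, mul_one, sub_zero, integral_const_mul]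

lemma measurable_stdNormalCDF : Measurable stdNormalCDF := by
  rw [funext stdNormalCDF_eq_cdf_gaussianReal]
  exact (monotone_cdf _).measurable

lemma measurable_berryC : Measurable berryC := by
  unfold berryC
  fun_prop

section LinkBudget

variable {P g N₀ PG h i τ : ℝ}

/-- The signal-to-interference-plus-noise ratio under fading power `h` and interference `i`. -/
noncomputable def sinr (P g N₀ PG h i : ℝ) : ℝ := P * h * g / (N₀ + i / PG)

/-- The largest interference under which fading power `h` still supports the rate `τ > 0`; it is
negative when the noise alone causes an outage. -/
noncomputable def interferenceMargin (P g N₀ PG h τ : ℝ) : ℝ :=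
  P * (h * g / (Real.exp τ - 1) - N₀ / P) * PG

/-- The least fading power which supports the rate `τ` in the absence of interference. -/
noncomputable def fadingThreshold (P g N₀ τ : ℝ) : ℝ := (Real.exp τ - 1) * N₀ / (P * g)

lemma log_one_add_sinr_lt_iff (hP : P ≠ 0) (hPG : 0 < PG) (hτ : 0 < τ)
    (hden : 0 < N₀ + i / PG) (hsinr : -1 < sinr P g N₀ PG h i) :
    Real.log (1 + sinr P g N₀ PG h i) < τ ↔ interferenceMargin P g N₀ PG h τ < i := by
  have hexp : 0 < Real.exp τ - 1 := sub_pos.2 (Real.one_lt_exp_iff.2 hτ)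
  have hmargin : interferenceMargin P g N₀ PG h τ =
      (P * h * g / (Real.exp τ - 1) - N₀) * PG := by
    unfold interferenceMargin
    field_simp
  calc Real.log (1 + sinr P g N₀ PG h i) < τ
      ↔ sinr P g N₀ PG h i < Real.exp τ - 1 := by
        rw [Real.log_lt_iff_lt_exp (by linarith), lt_sub_iff_add_lt']
    _ ↔ P * h * g / (Real.exp τ - 1) < N₀ + i / PG := by
        rw [sinr, div_lt_iff₀ hden, div_lt_iff₀ hexp, mul_comm (Real.exp τ - 1)]
    _ ↔ interferenceMargin P g N₀ PG h τ < i := by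
        rw [hmargin, ← lt_div_iff₀ hPG, sub_lt_iff_lt_add']

lemma interferenceMargin_neg (hP : 0 < P) (hg : 0 < g) (hPG : 0 < PG) (hτ : 0 < τ)
    (hh : h < fadingThreshold P g N₀ τ) : interferenceMargin P g N₀ PG h τ < 0 := by
  have hexp : 0 < Real.exp τ - 1 := sub_pos.2 (Real.one_lt_exp_iff.2 hτ)
  have hnoise : h * g / (Real.exp τ - 1) < N₀ / P := by
    rw [fadingThreshold, lt_div_iff₀ (mul_pos hP hg)] at hh
    rw [div_lt_div_iff₀ hexp hP]
    linarith
  exact mul_neg_of_neg_of_pos (mul_neg_of_pos_of_neg hP (sub_neg.2 hnoise)) hPG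

lemma measurable_interferenceMargin : Measurable fun h ↦ interferenceMargin P g N₀ PG h τ := by
  unfold interferenceMargin
  fun_prop

end LinkBudget

section Coverage

variable {P g N₀ PG h τ : ℝ} {G L U : ℝ → ℝ}

/-- The paper's `V⁺`, for an upper bound `U` on the CDF of the interference. -/
noncomputable def coverageUpper (P g N₀ PG : ℝ) (U : ℝ → ℝ) (h τ : ℝ) : ℝ :=
  if fadingThreshold P g N₀ τ ≤ h then min 1 (U (interferenceMargin P g N₀ PG h τ)) else 0

/-- The paper's `V⁻`, for a lower bound `L` on the CDF of the interference. -/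
noncomputable def coverageLower (P g N₀ PG : ℝ) (L : ℝ → ℝ) (h τ : ℝ) : ℝ :=
  if fadingThreshold P g N₀ τ ≤ h then max 0 (L (interferenceMargin P g N₀ PG h τ)) else 0

lemma coverageUpper_le_one : coverageUpper P g N₀ PG U h τ ≤ 1 := by
  unfold coverageUpper
  split_ifs
  exacts [min_le_left _ _, zero_le_one]

lemma coverageLower_nonneg : 0 ≤ coverageLower P g N₀ PG L h τ := by
  unfold coverageLower
  split_ifs
  exacts [le_max_left _ _, le_rfl]

lemma le_coverageUpper (hP : 0 < P) (hg : 0 < g) (hPG : 0 < PG) (hτ : 0 < τ)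
    (hG_one : ∀ t, G t ≤ 1) (hG_neg : ∀ t < 0, G t = 0) (hGU : ∀ t, G t ≤ U t) :
    G (interferenceMargin P g N₀ PG h τ) ≤ coverageUpper P g N₀ PG U h τ := by
  unfold coverageUpper
  split_ifs with hh
  · exact le_min (hG_one _) (hGU _)
  · exact (hG_neg _ (interferenceMargin_neg hP hg hPG hτ (not_le.1 hh))).le

lemma coverageLower_le (hG_nonneg : ∀ t, 0 ≤ G t) (hLG : ∀ t, L t ≤ G t) :
    coverageLower P g N₀ PG L h τ ≤ G (interferenceMargin P g N₀ PG h τ) := by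
  unfold coverageLower
  split_ifs
  exacts [max_le (hG_nonneg _) (hLG _), hG_nonneg _]

lemma measurable_coverageUpper (hU : Measurable U) :
    Measurable fun h ↦ coverageUpper P g N₀ PG U h τ :=
  .ite measurableSet_Ici (measurable_const.min (hU.comp measurable_interferenceMargin))
    measurable_const

lemma measurable_coverageLower (hL : Measurable L) :
    Measurable fun h ↦ coverageLower P g N₀ PG L h τ :=
  .ite measurableSet_Ici (measurable_const.max (hL.comp measurable_interferenceMargin))
    measurable_const

end Coverage

lemma abs_measureReal_le_sub_le_of_standardized {Ω : Type*} [MeasurableSpace Ω] {ν : Measure Ω}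
    {Y : Ω → ℝ} {m s : ℝ} (hs : 0 < s) {F e : ℝ → ℝ}
    (hF : ∀ x, |ν.real {ω | (Y ω - m) / s ≤ x} - F x| ≤ e x) (t : ℝ) :
    |ν.real {ω | Y ω ≤ t} - F ((t - m) / s)| ≤ e ((t - m) / s) := by
  simpa only [div_le_div_iff_of_pos_right hs, sub_le_sub_iff_right] using hF ((t - m) / s)

section CDF

variable {Ω α : Type*} [MeasurableSpace Ω] [MeasurableSpace α] {ν : Measure Ω}
  [IsProbabilityMeasure ν] {X : Ω → α} {Y : Ω → ℝ}

lemma cdf_map_eq_measureReal (hY : AEMeasurable Y ν) (t : ℝ) :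
    cdf (ν.map Y) t = ν.real {ω | Y ω ≤ t} := by
  have := Measure.isProbabilityMeasure_map hY
  rw [cdf_eq_real, map_measureReal_apply_of_aemeasurable hY measurableSet_Iic]
  rfl

lemma cdf_map_eq_zero_of_neg (hY : AEMeasurable Y ν) (hY_nonneg : 0 ≤ᵐ[ν] Y) {t : ℝ} (ht : t < 0) :
    cdf (ν.map Y) t = 0 := by
  rw [cdf_map_eq_measureReal hY, measureReal_eq_zero_iff, measure_eq_zero_iff_ae_notMem]
  filter_upwards [hY_nonneg] with ω hω
  exact not_le.2 (ht.trans_le hω)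

lemma measureReal_le_comp_eq_integral_cdf (hX : AEMeasurable X ν) (hY : AEMeasurable Y ν)
    (hXY : IndepFun X Y ν) {z : α → ℝ} (hz : Measurable z) :
    ν.real {ω | Y ω ≤ z (X ω)} = ∫ ω, cdf (ν.map Y) (z (X ω)) ∂ν := by
  have := Measure.isProbabilityMeasure_map hY
  have hS : MeasurableSet {p : α × ℝ | p.2 ≤ z p.1} :=
    measurableSet_le measurable_snd (hz.comp measurable_fst)
  have hcdf : Measurable fun x ↦ cdf (ν.map Y) (z x) := (monotone_cdf _).measurable.comp hz
  have hlintegral : ν {ω | Y ω ≤ z (X ω)} = ∫⁻ ω, ENNReal.ofReal (cdf (ν.map Y) (z (X ω))) ∂ν :=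
    calc ν {ω | Y ω ≤ z (X ω)}
        = ν.map (fun ω ↦ (X ω, Y ω)) {p | p.2 ≤ z p.1} :=
          (Measure.map_apply_of_aemeasurable (hX.prodMk hY) hS).symm
      _ = ∫⁻ x, ν.map Y (Set.Iic (z x)) ∂ν.map X := by
          rw [(indepFun_iff_map_prod_eq_prod_map_map hX hY).1 hXY, Measure.prod_apply hS]
          rfl
      _ = ∫⁻ ω, ENNReal.ofReal (cdf (ν.map Y) (z (X ω))) ∂ν := by
          simp only [← ofReal_cdf]
          exact lintegral_map' hcdf.ennreal_ofReal.aemeasurable hX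
  rw [Measure.real, hlintegral, integral_eq_lintegral_of_nonneg_ae
    (ae_of_all _ fun ω ↦ cdf_nonneg _ _) (hcdf.comp_aemeasurable hX).aestronglyMeasurable]

lemma integrable_cdf_map_comp (hX : AEMeasurable X ν) {z : α → ℝ} (hz : Measurable z) :
    Integrable (fun ω ↦ cdf (ν.map Y) (z (X ω))) ν :=
  .of_mem_Icc 0 1 (((monotone_cdf _).measurable.comp hz).comp_aemeasurable hX)
    (ae_of_all _ fun _ ↦ ⟨cdf_nonneg _ _, cdf_le_one _ _⟩)

end CDF

section Outage

variable {Ω : Type*} [MeasurableSpace Ω] {ν : Measure Ω} [IsProbabilityMeasure ν]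
  {H I : Ω → ℝ} {P g N₀ PG τ : ℝ} {L U : ℝ → ℝ}

/-- The probability that the link with fading power `H` and interference `I` does not support the
rate `τ`. -/
noncomputable def outageProbability (ν : Measure Ω) (H I : Ω → ℝ) (P g N₀ PG τ : ℝ) : ℝ :=
  ν.real {ω | Real.log (1 + sinr P g N₀ PG (H ω) (I ω)) < τ}

/-- The supremum in `[0,∞]` of the rates `τ ≥ 0` with `p τ ≤ γ`: the outage capacity when `p` is
the outage probability as a function of the rate, and the paper's bounds on it when `p` is an
estimate of that probability. -/
noncomputable def outageCapacity (p : ℝ → ℝ) (γ : ℝ) : ℝ≥0∞ :=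
  sSup (ENNReal.ofReal '' {τ : ℝ | 0 ≤ τ ∧ p τ ≤ γ})

lemma outageCapacity_anti {p q : ℝ → ℝ} (hpq : ∀ τ, 0 < τ → p τ ≤ q τ) (γ : ℝ) :
    outageCapacity q γ ≤ outageCapacity p γ := by
  refine sSup_le ?_
  rintro _ ⟨τ, ⟨hτ, hq⟩, rfl⟩
  rcases hτ.eq_or_lt with rfl | hτ_pos
  · simp
  · exact le_sSup ⟨τ, ⟨hτ, (hpq τ hτ_pos).trans hq⟩, rfl⟩

lemma outageProbability_eq_one_sub_integral_cdf (hH : AEMeasurable H ν) (hI : AEMeasurable I ν)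
    (hindep : IndepFun H I ν) (hH_nonneg : 0 ≤ᵐ[ν] H) (hP : 0 < P) (hg : 0 ≤ g) (hPG : 0 < PG)
    (hden : ∀ᵐ ω ∂ν, 0 < N₀ + I ω / PG) (hτ : 0 < τ) :
    outageProbability ν H I P g N₀ PG τ =
      1 - ∫ ω, cdf (ν.map I) (interferenceMargin P g N₀ PG (H ω) τ) ∂ν := by
  have hevent : {ω | Real.log (1 + sinr P g N₀ PG (H ω) (I ω)) < τ} =ᵐ[ν]
      ({ω | I ω ≤ interferenceMargin P g N₀ PG (H ω) τ}ᶜ : Set Ω) := by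
    filter_upwards [hH_nonneg, hden] with ω hHω hdenω
    have hsinr : 0 ≤ sinr P g N₀ PG (H ω) (I ω) :=
      div_nonneg (mul_nonneg (mul_nonneg hP.le hHω) hg) hdenω.le
    exact propext ((log_one_add_sinr_lt_iff hP.ne' hPG hτ hdenω (by linarith)).trans not_le.symm)
  have hmeas : NullMeasurableSet {ω | I ω ≤ interferenceMargin P g N₀ PG (H ω) τ} ν :=
    nullMeasurableSet_le hI (measurable_interferenceMargin.comp_aemeasurable hH)
  rw [outageProbability, measureReal_congr hevent, probReal_compl_eq_one_sub₀ hmeas,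
    measureReal_le_comp_eq_integral_cdf hH hI hindep measurable_interferenceMargin]

lemma one_sub_integral_coverageUpper_le_outageProbability (hH : AEMeasurable H ν)
    (hI : AEMeasurable I ν) (hindep : IndepFun H I ν) (hH_nonneg : 0 ≤ᵐ[ν] H)
    (hI_nonneg : 0 ≤ᵐ[ν] I) (hP : 0 < P) (hg : 0 < g) (hPG : 0 < PG)
    (hden : ∀ᵐ ω ∂ν, 0 < N₀ + I ω / PG) (hU_meas : Measurable U)
    (hU : ∀ t, ν.real {ω | I ω ≤ t} ≤ U t) (hτ : 0 < τ) :
    1 - ∫ ω, coverageUpper P g N₀ PG U (H ω) τ ∂ν ≤ outageProbability ν H I P g N₀ PG τ := by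
  have hle (h : ℝ) : cdf (ν.map I) (interferenceMargin P g N₀ PG h τ) ≤
      coverageUpper P g N₀ PG U h τ :=
    le_coverageUpper hP hg hPG hτ (cdf_le_one _) (fun _ ↦ cdf_map_eq_zero_of_neg hI hI_nonneg)
      fun t ↦ (cdf_map_eq_measureReal hI t).trans_le (hU t)
  have hint : Integrable (fun ω ↦ coverageUpper P g N₀ PG U (H ω) τ) ν :=
    .of_mem_Icc 0 1 ((measurable_coverageUpper hU_meas).comp_aemeasurable hH)
      (ae_of_all _ fun _ ↦ ⟨(cdf_nonneg _ _).trans (hle _), coverageUpper_le_one⟩)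
  rw [outageProbability_eq_one_sub_integral_cdf hH hI hindep hH_nonneg hP hg.le hPG hden hτ]
  exact sub_le_sub_left (integral_mono (integrable_cdf_map_comp hH measurable_interferenceMargin)
    hint fun ω ↦ hle (H ω)) 1

lemma outageProbability_le_one_sub_integral_coverageLower (hH : AEMeasurable H ν)
    (hI : AEMeasurable I ν) (hindep : IndepFun H I ν) (hH_nonneg : 0 ≤ᵐ[ν] H)
    (hP : 0 < P) (hg : 0 ≤ g) (hPG : 0 < PG) (hden : ∀ᵐ ω ∂ν, 0 < N₀ + I ω / PG)
    (hL_meas : Measurable L) (hL : ∀ t, L t ≤ ν.real {ω | I ω ≤ t}) (hτ : 0 < τ) :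
    outageProbability ν H I P g N₀ PG τ ≤ 1 - ∫ ω, coverageLower P g N₀ PG L (H ω) τ ∂ν := by
  have hle (h : ℝ) : coverageLower P g N₀ PG L h τ ≤
      cdf (ν.map I) (interferenceMargin P g N₀ PG h τ) :=
    coverageLower_le (cdf_nonneg _) fun t ↦ (hL t).trans_eq (cdf_map_eq_measureReal hI t).symm
  have hint : Integrable (fun ω ↦ coverageLower P g N₀ PG L (H ω) τ) ν :=
    .of_mem_Icc 0 1 ((measurable_coverageLower hL_meas).comp_aemeasurable hH)
      (ae_of_all _ fun _ ↦ ⟨coverageLower_nonneg, (hle _).trans (cdf_le_one _ _)⟩)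
  rw [outageProbability_eq_one_sub_integral_cdf hH hI hindep hH_nonneg hP hg hPG hden hτ]
  exact sub_le_sub_left (integral_mono hint
    (integrable_cdf_map_comp hH measurable_interferenceMargin) fun ω ↦ hle (H ω)) 1

theorem outage_capacity_bounds_generic_general (hH : AEMeasurable H ν) (hI : AEMeasurable I ν)
    (hindep : IndepFun H I ν) (hH_nonneg : 0 ≤ᵐ[ν] H) (hI_nonneg : 0 ≤ᵐ[ν] I)
    (hP : 0 < P) (hg : 0 < g) (hPG : 0 < PG) (hden : ∀ᵐ ω ∂ν, 0 < N₀ + I ω / PG)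
    (hL_meas : Measurable L) (hU_meas : Measurable U)
    (hL : ∀ t, L t ≤ ν.real {ω | I ω ≤ t}) (hU : ∀ t, ν.real {ω | I ω ≤ t} ≤ U t) (γ : ℝ) :
    outageCapacity (outageProbability ν H I P g N₀ PG) γ ≤
        outageCapacity (fun τ ↦ 1 - ∫ ω, coverageUpper P g N₀ PG U (H ω) τ ∂ν) γ ∧
      outageCapacity (fun τ ↦ 1 - ∫ ω, coverageLower P g N₀ PG L (H ω) τ ∂ν) γ ≤
        outageCapacity (outageProbability ν H I P g N₀ PG) γ :=
  ⟨outageCapacity_anti (fun _ ↦ one_sub_integral_coverageUpper_le_outageProbability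
      hH hI hindep hH_nonneg hI_nonneg hP hg hPG hden hU_meas hU) γ,
    outageCapacity_anti (fun _ ↦ outageProbability_le_one_sub_integral_coverageLower
      hH hI hindep hH_nonneg hP hg.le hPG hden hL_meas hL) γ⟩

end Outage

/-- Theorem 4: bounds on the outage capacity `C_o(γ)` under the generic association
policy, assuming the Gaussian approximation bound for the interference `I`.
Suprema are taken in `[0,∞]` (i.e. `ℝ≥0∞`) with `sup ∅ = 0`. -/
theorem outage_capacity_bounds_generic
    {Ω : Type*} [MeasureSpace Ω] [IsProbabilityMeasure (ℙ : Measure Ω)]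
    (H I : Ω → ℝ) (hHmeas : Measurable H) (hImeas : Measurable I)
    (hindep : IndepFun H I ℙ)
    (hHnn : ∀ ω, 0 ≤ H ω) (hInn : ∀ ω, 0 ≤ I ω)
    (hI1 : Integrable I ℙ) (hI2 : Integrable (fun ω => (I ω) ^ 2) ℙ)
    (μ σ : ℝ) (hμ : μ = ∫ ω, I ω) (hσ : σ ^ 2 = ∫ ω, (I ω - μ) ^ 2) (hσpos : 0 < σ)
    (P g N₀ PG Ξ : ℝ) (hP : 0 < P) (hg : 0 < g) (hN₀ : 0 ≤ N₀) (hPG : 1 ≤ PG)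
    (hΞ : 0 ≤ Ξ)
    (hpos : ∀ᵐ ω ∂(ℙ : Measure Ω), 0 < N₀ + I ω / PG)
    (hGauss : ∀ x : ℝ,
      |(ℙ {ω | (I ω - μ) / σ ≤ x}).toReal - stdNormalCDF x| ≤ Ξ * berryC x)
    (γ : ℝ) (hγ : γ ∈ Set.Ioo (0 : ℝ) 1)
    (ζ Vp Vm : ℝ → ℝ → ℝ)
    (hζ : ∀ h τ, ζ h τ = (P * (h * g / (Real.exp τ - 1) - N₀ / P) * PG - μ) / σ)
    (hVp : ∀ h τ, Vp h τ =
      if (Real.exp τ - 1) * N₀ / (P * g) ≤ h then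
        min 1 (stdNormalCDF (ζ h τ) + Ξ * berryC (ζ h τ)) else 0)
    (hVm : ∀ h τ, Vm h τ =
      if (Real.exp τ - 1) * N₀ / (P * g) ≤ h then
        max 0 (stdNormalCDF (ζ h τ) - Ξ * berryC (ζ h τ)) else 0)
    (Co : ℝ≥0∞)
    (hCo : Co = sSup (ENNReal.ofReal '' {τ : ℝ | 0 ≤ τ ∧
      (ℙ {ω | Real.log (1 + P * H ω * g / (N₀ + I ω / PG)) < τ}).toReal ≤ γ})) :
    Co ≤ sSup (ENNReal.ofReal '' {τ : ℝ | 0 ≤ τ ∧ 1 - (∫ ω, Vp (H ω) τ) ≤ γ}) ∧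
      sSup (ENNReal.ofReal '' {τ : ℝ | 0 ≤ τ ∧ 1 - (∫ ω, Vm (H ω) τ) ≤ γ}) ≤ Co := by
  have hstd : Measurable fun t : ℝ ↦ (t - μ) / σ := by fun_prop
  have hΨ := measurable_stdNormalCDF.comp hstd
  have hc := (measurable_berryC.comp hstd).const_mul Ξ
  have hCDF (t : ℝ) : |(ℙ : Measure Ω).real {ω | I ω ≤ t} - stdNormalCDF ((t - μ) / σ)| ≤
      Ξ * berryC ((t - μ) / σ) :=
    abs_measureReal_le_sub_le_of_standardized hσpos hGauss t
  simp only [hCo, hVp, hVm, hζ]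
  exact outage_capacity_bounds_generic_general hHmeas.aemeasurable hImeas.aemeasurable hindep
    (ae_of_all _ hHnn) (ae_of_all _ hInn) hP hg (one_pos.trans_le hPG) hpos (hΨ.sub hc)
    (hΨ.add hc) (fun t ↦ sub_le_comm.1 (abs_sub_le_iff.1 (hCDF t)).2)
    (fun t ↦ sub_le_iff_le_add'.1 (abs_sub_le_iff.1 (hCDF t)).1) γ
end

section
/- In the BARSS nearest-distance setup described in the context, assume additionally that the mean measures are homogeneous: m_i(r) = π·λ_i·r² with λ_i > 0 for every i. Then for each fixed k, the tier-k association probability satisfies p_k* := P( β_i·P_i·G_i(R_i) ≤ β_k·P_k·G_k(R_k) for all i ≠ k ) = 2π·λ_k · ∫₀^∞ u·e^{−π·λ_k·u²} · ∏_{i≠k} exp( −π·λ_i·(Q_i^{(k)}(u))² ) du. -/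
open MeasureTheory ProbabilityTheory
open scoped ProbabilityTheory ENNReal

/-! Tier `i` does not beat tier `k` exactly when its distance `R i` is at least the threshold
`Q i (R k)`: the level set of a continuous path loss is closed, so its infimum `G⁻¹(y)` is attained
and monotonicity turns `G r ≤ y` into `G⁻¹(y) ≤ r`. Conditioning on `R k = u`, independence makes
the probability of these events the product of the survival probabilities `exp (-m i (Q i u))`, and
averaging over the law of `R k`, whose density is minus the derivative of its survival function,
gives the integral. -/

open Set Filter Topology

section LevelSet

variable {α δ : Type*} [ConditionallyCompleteLinearOrder α] [TopologicalSpace α] [OrderTopology α]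
  [LinearOrder δ] [TopologicalSpace δ] [OrderClosedTopology δ]
  {g : α → δ} {a r : α} {y : δ}

lemma exists_eq_of_continuousOn_Ici [DenselyOrdered α] (hg : ContinuousOn g (Ici a))
    (hr : a ≤ r) (hya : y ≤ g a) (hry : g r ≤ y) : ∃ x ≤ r, a ≤ x ∧ g x = y := by
  obtain ⟨x, ⟨hax, hxr⟩, hxy⟩ :=
    intermediate_value_Icc' hr (hg.mono Icc_subset_Ici_self) ⟨hry, hya⟩
  exact ⟨x, hxr, hax, hxy⟩

lemma sInf_level_mem (hg : ContinuousOn g (Ici a)) (hne : {x | a ≤ x ∧ g x = y}.Nonempty) :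
    sInf {x | a ≤ x ∧ g x = y} ∈ {x | a ≤ x ∧ g x = y} :=
  (hg.preimage_isClosed_of_isClosed isClosed_Ici isClosed_singleton).csInf_mem hne
    ⟨a, fun _ hx => hx.1⟩

lemma sInf_level_le_iff [DenselyOrdered α] (hg : ContinuousOn g (Ici a))
    (hanti : AntitoneOn g (Ici a)) (hne : {x | a ≤ x ∧ g x = y}.Nonempty) (hr : a ≤ r) :
    sInf {x | a ≤ x ∧ g x = y} ≤ r ↔ g r ≤ y := by
  obtain ⟨ha, hy⟩ := sInf_level_mem hg hne
  refine ⟨fun h => (hanti ha hr h).trans hy.le, fun h => ?_⟩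
  have hya : y ≤ g a := hy ▸ hanti self_mem_Ici ha ha
  obtain ⟨x, hxr, hx⟩ := exists_eq_of_continuousOn_Ici hg hr hya h
  exact (csInf_le ⟨a, fun _ hx => hx.1⟩ hx).trans hxr

end LevelSet

section GeneralizedInverse

/-- `h` is the generalized inverse `G⁻¹` of the path-loss function `g` on `(0, ∞)`: the first
distance at which `g` takes the value `y`, and `0` when `y` exceeds `g 0`.
Nothing is required of `h` at nonpositive `y`. -/
structure IsGeneralizedInverse (g h : ℝ → ℝ) : Prop where
  eq_sInf : ∀ y, 0 < y → y ≤ g 0 → h y = sInf {x : ℝ | 0 ≤ x ∧ g x = y}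
  eq_zero : ∀ y, g 0 < y → h y = 0

namespace IsGeneralizedInverse

variable {g h : ℝ → ℝ} {y r : ℝ}

lemma nonneg (hgh : IsGeneralizedInverse g h) (hy : 0 < y) : 0 ≤ h y := by
  rcases lt_or_ge (g 0) y with hlt | hle
  · exact (hgh.eq_zero y hlt).ge
  · exact hgh.eq_sInf y hy hle ▸ Real.sInf_nonneg fun _ hx => hx.1

lemma le_iff (hgh : IsGeneralizedInverse g h) (hg : ContinuousOn g (Ici 0))
    (hanti : AntitoneOn g (Ici 0)) (hlim : Tendsto g atTop (𝓝 0)) (hy : 0 < y) (hr : 0 ≤ r) :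
    h y ≤ r ↔ g r ≤ y := by
  rcases lt_or_ge (g 0) y with hlt | hle
  · rw [hgh.eq_zero y hlt]
    exact iff_of_true hr ((hanti self_mem_Ici hr hr).trans hlt.le)
  · obtain ⟨s, hsy, hs⟩ := ((hlim.eventually_lt_const hy).and (eventually_ge_atTop 0)).exists
    obtain ⟨x, -, hx⟩ := exists_eq_of_continuousOn_Ici hg hs hle hsy.le
    rw [hgh.eq_sInf y hy hle, sInf_level_le_iff hg hanti ⟨x, hx⟩ hr]

end IsGeneralizedInverse

end GeneralizedInverse

section Survival

/-- The survival function `r ↦ μ [r, ∞)` of a distribution `μ` on the real line, closed at `r` as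
in `P(R ≥ r)`. -/
noncomputable def survival (μ : Measure ℝ) (r : ℝ) : ℝ := μ.real (Ici r)

variable {μ : Measure ℝ} [IsFiniteMeasure μ] {f : ℝ → ℝ} {a : ℝ}

lemma antitone_survival : Antitone (survival μ) :=
  fun _ _ h => measureReal_mono (Ici_subset_Ici.2 h)

lemma tendsto_survival_atTop : Tendsto (survival μ) atTop (𝓝 0) := by
  have hempty : ⋂ r : ℝ, Ici r = ∅ := by simp [iInter_eq_empty_iff, exists_gt]
  have h := tendsto_measure_iInter_atTop (μ := μ) (s := fun r : ℝ => Ici r)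
    (fun _ => measurableSet_Ici.nullMeasurableSet) (fun _ _ => Ici_subset_Ici.2)
    ⟨0, measure_ne_top _ _⟩
  rw [hempty, measure_empty] at h
  exact (ENNReal.tendsto_toReal ENNReal.zero_ne_top).comp h

lemma nonneg_of_hasDerivAt_survival {r d : ℝ} (h : HasDerivAt (survival μ) (-d) r) : 0 ≤ d :=
  neg_nonpos.1 (h.nonpos_of_antitone antitone_survival)

lemma integrableOn_of_hasDerivAt_survival (hcont : ContinuousWithinAt (survival μ) (Ici a) a)
    (hderiv : ∀ r ∈ Ioi a, HasDerivAt (survival μ) (-f r) r) : IntegrableOn f (Ioi a) := by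
  have hneg : IntegrableOn (fun r => -f r) (Ioi a) :=
    integrableOn_Ioi_deriv_of_nonpos hcont hderiv
      (fun r hr => (hderiv r hr).nonpos_of_antitone antitone_survival) tendsto_survival_atTop
  simpa using hneg.neg

lemma setLIntegral_Ioi_of_hasDerivAt_survival
    (hcont : ContinuousWithinAt (survival μ) (Ici a) a)
    (hderiv : ∀ r ∈ Ioi a, HasDerivAt (survival μ) (-f r) r) :
    ∫⁻ u in Ioi a, ENNReal.ofReal (f u) = μ (Ici a) := by
  have hint := integrableOn_of_hasDerivAt_survival hcont hderiv
  have hval : ∫ u in Ioi a, f u = survival μ a := by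
    have h := integral_Ioi_of_hasDerivAt_of_tendsto hcont hderiv hint.neg tendsto_survival_atTop
    rw [integral_neg] at h
    linarith
  have hnn : 0 ≤ᵐ[volume.restrict (Ioi a)] f :=
    ae_restrict_of_forall_mem measurableSet_Ioi fun r hr =>
      nonneg_of_hasDerivAt_survival (hderiv r hr)
  rw [← ofReal_integral_eq_lintegral_ofReal hint hnn, hval, survival, ofReal_measureReal]

lemma eq_withDensity_of_hasDerivAt_survival (ha : μ (Iio a) = 0)
    (hcont : ContinuousWithinAt (survival μ) (Ici a) a)
    (hderiv : ∀ r ∈ Ioi a, HasDerivAt (survival μ) (-f r) r) :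
    μ = (volume.restrict (Ioi a)).withDensity fun u => ENNReal.ofReal (f u) := by
  refine Measure.ext_of_Ici _ _ fun b => ?_
  rw [withDensity_apply _ measurableSet_Ici, Measure.restrict_restrict measurableSet_Ici]
  rcases le_or_gt b a with hba | hab
  · have hmass : μ (Ici b) = μ (Ici a) := by
      rw [← Ico_union_Ici_eq_Ici hba]
      exact measure_congr (union_ae_eq_right_of_ae_eq_empty
        (ae_eq_empty.2 (measure_mono_null Ico_subset_Iio_self ha)))
    rw [inter_eq_right.2 (Ioi_subset_Ici hba), hmass,
      setLIntegral_Ioi_of_hasDerivAt_survival hcont hderiv]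
  · rw [inter_eq_left.2 (Ici_subset_Ioi.2 hab), setLIntegral_congr Ioi_ae_eq_Ici.symm,
      setLIntegral_Ioi_of_hasDerivAt_survival (hderiv b hab).continuousAt.continuousWithinAt
        fun r hr => hderiv r (hab.trans hr)]

lemma integral_eq_of_hasDerivAt_survival (ha : μ (Iio a) = 0)
    (hcont : ContinuousWithinAt (survival μ) (Ici a) a)
    (hderiv : ∀ r ∈ Ioi a, HasDerivAt (survival μ) (-f r) r)
    {E : Type*} [NormedAddCommGroup E] [NormedSpace ℝ E] (φ : ℝ → E) :
    ∫ u, φ u ∂μ = ∫ u in Ioi a, f u • φ u := by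
  have hf := (integrableOn_of_hasDerivAt_survival hcont hderiv).aemeasurable
  rw [eq_withDensity_of_hasDerivAt_survival ha hcont hderiv,
    integral_withDensity_eq_integral_toReal_smul₀ hf.ennreal_ofReal (by simp)]
  refine setIntegral_congr_fun measurableSet_Ioi fun u hu => ?_
  simp only [ENNReal.toReal_ofReal (nonneg_of_hasDerivAt_survival (hderiv u hu))]

lemma integral_eq_of_survival_eq_exp_neg {m m' : ℝ → ℝ} (ha : μ (Iio a) = 0)
    (hsurv : ∀ r, a ≤ r → survival μ r = Real.exp (-m r))
    (hcont : ContinuousWithinAt m (Ici a) a) (hderiv : ∀ r ∈ Ioi a, HasDerivAt m (m' r) r)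
    {E : Type*} [NormedAddCommGroup E] [NormedSpace ℝ E] (φ : ℝ → E) :
    ∫ u, φ u ∂μ = ∫ u in Ioi a, (m' u * Real.exp (-m u)) • φ u := by
  refine integral_eq_of_hasDerivAt_survival ha ?_ (fun r hr => ?_) φ
  · exact hcont.neg.rexp.congr hsurv (hsurv a le_rfl)
  · have hexp : HasDerivAt (fun r => Real.exp (-m r)) (-(m' r * Real.exp (-m r))) r := by
      simpa [mul_comm] using (hderiv r hr).neg.exp
    exact hexp.congr_of_eventuallyEq
      (eventually_of_mem (Ioi_mem_nhds hr) fun s hs => hsurv s (le_of_lt hs))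

end Survival

section Independence

variable {Ω ι : Type*} [MeasurableSpace Ω] {μ : Measure Ω}

lemma indepFun_restrict_of_notMem {α : ι → Type*} [∀ i, MeasurableSpace (α i)]
    {X : ∀ i, Ω → α i} (hX : ∀ i, Measurable (X i)) (hind : iIndepFun X μ)
    {k : ι} {s : Finset ι} (hk : k ∉ s) : IndepFun (X k) (fun ω (i : s) => X i ω) μ :=
  (hind.indepFun_finset {k} s (Finset.disjoint_singleton_left.2 hk) hX).comp
    (measurable_pi_apply (⟨k, Finset.mem_singleton_self k⟩ : ({k} : Finset ι))) measurable_id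

lemma measureReal_forall_mem_eq_integral_prod {α : ι → Type*} [∀ i, MeasurableSpace (α i)]
    {X : ∀ i, Ω → α i} (hX : ∀ i, Measurable (X i)) (hind : iIndepFun X μ)
    {k : ι} {s : Finset ι} (hk : k ∉ s) {E : ∀ i, Set (α k × α i)}
    (hE : ∀ i ∈ s, MeasurableSet (E i)) :
    μ.real {ω | ∀ i ∈ s, (X k ω, X i ω) ∈ E i} =
      ∫ u, ∏ i ∈ s, μ.real {ω | (u, X i ω) ∈ E i} ∂μ.map (X k) := by
  have := hind.isProbabilityMeasure
  set Y : Ω → (∀ i : s, α i) := fun ω i => X i ω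
  have hY : Measurable Y := measurable_pi_lambda _ fun i => hX i
  set F : Set (α k × (∀ i : s, α i)) := ⋂ i : s, {p | (p.1, p.2 i) ∈ E i}
  have hF : MeasurableSet F := MeasurableSet.iInter fun i =>
    (measurable_fst.prodMk ((measurable_pi_apply i).comp measurable_snd)) (hE i i.2)
  have hsection (u : α k) :
      (μ.map Y).real (Prod.mk u ⁻¹' F) = ∏ i ∈ s, μ.real {ω | (u, X i ω) ∈ E i} := by
    have hpre : Y ⁻¹' (Prod.mk u ⁻¹' F) = ⋂ i ∈ s, X i ⁻¹' (Prod.mk u ⁻¹' E i) := by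
      ext ω
      simp [F, Y]
    rw [map_measureReal_apply hY (measurable_prodMk_left hF), hpre, measureReal_def,
      hind.measure_inter_preimage_eq_mul s fun i hi => measurable_prodMk_left (hE i hi),
      ENNReal.toReal_prod]
    rfl
  have hevent : {ω | ∀ i ∈ s, (X k ω, X i ω) ∈ E i} = (fun ω => (X k ω, Y ω)) ⁻¹' F := by
    ext ω
    simp [F, Y]
  have hlaw := (indepFun_restrict_of_notMem hX hind hk).map_prod_eq_prod_map_map
    (hX k).aemeasurable hY.aemeasurable
  rw [hevent, ← map_measureReal_apply ((hX k).prodMk hY) hF, hlaw, measureReal_def,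
    Measure.prod_apply hF, ← integral_toReal (measurable_measure_prodMk_left hF).aemeasurable
      (ae_of_all _ fun u => measure_lt_top _ _)]
  exact integral_congr_ae (ae_of_all _ hsection)

lemma measureReal_forall_le_eq_integral_prod {f : ι → ℝ → ℝ} {R : ι → Ω → ℝ} {a : ℝ}
    (hf : ∀ i, ContinuousOn (f i) (Ici a)) (hR : ∀ i, Measurable (R i))
    (hRa : ∀ i ω, a ≤ R i ω) (hind : iIndepFun R μ) {k : ι} {s : Finset ι} (hk : k ∉ s) :
    μ.real {ω | ∀ i ∈ s, f i (R i ω) ≤ f k (R k ω)} =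
      ∫ u, ∏ i ∈ s, μ.real {ω | f i (R i ω) ≤ f k u} ∂μ.map (R k) := by
  set E : ι → Set (ℝ × ℝ) := fun i => {p ∈ Ici a ×ˢ Ici a | f i p.2 ≤ f k p.1}
  have hE (i : ι) : MeasurableSet (E i) :=
    ((isClosed_Ici.prod isClosed_Ici).isClosed_le
      ((hf i).comp continuousOn_snd fun _ hp => hp.2)
      ((hf k).comp continuousOn_fst fun _ hp => hp.1)).measurableSet
  have hmem {u : ℝ} (hu : a ≤ u) (i : ι) (ω : Ω) :
      (u, R i ω) ∈ E i ↔ f i (R i ω) ≤ f k u := by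
    simp [E, hu, hRa i ω]
  have hae : ∀ᵐ u ∂μ.map (R k), a ≤ u :=
    (ae_map_iff (hR k).aemeasurable measurableSet_Ici).2 (ae_of_all _ (hRa k))
  calc μ.real {ω | ∀ i ∈ s, f i (R i ω) ≤ f k (R k ω)}
      = μ.real {ω | ∀ i ∈ s, (R k ω, R i ω) ∈ E i} := by simp only [hmem (hRa k _)]
    _ = ∫ u, ∏ i ∈ s, μ.real {ω | (u, R i ω) ∈ E i} ∂μ.map (R k) :=
      measureReal_forall_mem_eq_integral_prod hR hind hk fun i _ => hE i
    _ = ∫ u, ∏ i ∈ s, μ.real {ω | f i (R i ω) ≤ f k u} ∂μ.map (R k) :=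
      integral_congr_ae (hae.mono fun u hu => by simp only [hmem hu])

end Independence

lemma hasDerivAt_const_mul_sq (c x : ℝ) : HasDerivAt (fun r => c * r ^ 2) (2 * c * x) x :=
  ((hasDerivAt_pow 2 x).const_mul c).congr_deriv (by push_cast; ring)

/-- Lemma 5 of the paper: `m i r` is the mean number of tier-`i` stations within distance `r`. -/
theorem barss_association_probability_homogeneous_general
    {Ω ι : Type*} [MeasurableSpace Ω] {μ : Measure Ω} [Fintype ι] [DecidableEq ι] (k : ι)
    {β P : ι → ℝ} (hβ : ∀ i, 0 < β i) (hP : ∀ i, 0 < P i) {G : ι → ℝ → ℝ}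
    (hGcont : ∀ i, ContinuousOn (G i) (Ici 0)) (hGanti : ∀ i, AntitoneOn (G i) (Ici 0))
    (hGpos : ∀ x, 0 ≤ x → 0 < G k x) (hGlim : ∀ i, Tendsto (G i) atTop (𝓝 0))
    {Ginv : ι → ℝ → ℝ} (hGinv : ∀ i, IsGeneralizedInverse (G i) (Ginv i))
    {Q : ι → ℝ → ℝ} (hQ : ∀ i u, Q i u = Ginv i (β k * P k / (β i * P i) * G k u))
    {R : ι → Ω → ℝ} (hRmeas : ∀ i, Measurable (R i)) (hRnn : ∀ i ω, 0 ≤ R i ω)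
    (hRindep : iIndepFun R μ) {m : ι → ℝ → ℝ} {m' : ℝ → ℝ}
    (hsurv : ∀ i r, 0 ≤ r → μ {ω | r ≤ R i ω} = ENNReal.ofReal (Real.exp (-m i r)))
    (hmcont : ContinuousWithinAt (m k) (Ici 0) 0)
    (hmderiv : ∀ u ∈ Ioi 0, HasDerivAt (m k) (m' u) u) :
    μ.real {ω | ∀ i, i ≠ k → β i * P i * G i (R i ω) ≤ β k * P k * G k (R k ω)} =
      ∫ u in Ioi 0, m' u * Real.exp (-m k u) *
        ∏ i ∈ Finset.univ.erase k, Real.exp (-m i (Q i u)) := by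
  have := hRindep.isProbabilityMeasure
  have hw (i : ι) : 0 < β i * P i := mul_pos (hβ i) (hP i)
  have hsurv_real (i : ι) {r : ℝ} (hr : 0 ≤ r) : μ.real {ω | r ≤ R i ω} = Real.exp (-m i r) := by
    rw [measureReal_def, hsurv i r hr, ENNReal.toReal_ofReal (Real.exp_pos _).le]
  have hwin {u : ℝ} (hu : 0 < u) (i : ι) :
      μ.real {ω | β i * P i * G i (R i ω) ≤ β k * P k * G k u} = Real.exp (-m i (Q i u)) := by
    have hy : 0 < β k * P k / (β i * P i) * G k u :=
      mul_pos (div_pos (hw k) (hw i)) (hGpos u hu.le)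
    rw [hQ, ← hsurv_real i ((hGinv i).nonneg hy)]
    congr! 3 with ω
    rw [(hGinv i).le_iff (hGcont i) (hGanti i) (hGlim i) hy (hRnn i ω), div_mul_eq_mul_div,
      le_div_iff₀' (hw i)]
  have hneg : μ.map (R k) (Iio 0) = 0 := by
    rw [Measure.map_apply (hRmeas k) measurableSet_Iio]
    simp [preimage, (hRnn k _).not_gt]
  have hRsurv (r : ℝ) (hr : 0 ≤ r) : survival (μ.map (R k)) r = Real.exp (-m k r) := by
    rw [survival, map_measureReal_apply (hRmeas k) measurableSet_Ici]
    exact hsurv_real k hr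
  have hmix := measureReal_forall_le_eq_integral_prod (f := fun i x => β i * P i * G i x)
    (fun i => (hGcont i).const_mul _) hRmeas hRnn hRindep (Finset.notMem_erase k Finset.univ)
  simp only [Finset.mem_erase, Finset.mem_univ, and_true] at hmix
  rw [hmix, integral_eq_of_survival_eq_exp_neg hneg hRsurv hmcont hmderiv]
  refine setIntegral_congr_fun measurableSet_Ioi fun u hu => ?_
  simp only [smul_eq_mul, hwin hu]

/-- The homogeneous specialization of Lemma 5 (equation "Connection Prob 3" in
Appendix D): with `m_i(r) = π λ_i r²`, the tier-`k` association probability under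
the BARSS policy equals
`2π λ_k ∫₀^∞ u e^{−π λ_k u²} ∏_{i≠k} exp(−π λ_i (Q_i^{(k)}(u))²) du`. -/
theorem barss_association_probability_homogeneous
    {Ω : Type*} [MeasureSpace Ω] [IsProbabilityMeasure (ℙ : Measure Ω)]
    (K : ℕ) (hK : 2 ≤ K) (k : Fin K)
    (β P lam : Fin K → ℝ)
    (hβ : ∀ i, 0 < β i) (hP : ∀ i, 0 < P i) (hlam : ∀ i, 0 < lam i)
    (G : Fin K → ℝ → ℝ)
    (hGcont : ∀ i, ContinuousOn (G i) (Set.Ici 0))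
    (hGanti : ∀ i, ∀ x y : ℝ, 0 ≤ x → x ≤ y → G i y ≤ G i x)
    (hGpos : ∀ i, ∀ x : ℝ, 0 ≤ x → 0 < G i x)
    (hGlim : ∀ i, Filter.Tendsto (G i) Filter.atTop (nhds 0))
    (Ginv : Fin K → ℝ → ℝ)
    (hGinv1 : ∀ i, ∀ y : ℝ, 0 < y → y ≤ G i 0 →
      Ginv i y = sInf {x : ℝ | 0 ≤ x ∧ G i x = y})
    (hGinv2 : ∀ i, ∀ y : ℝ, G i 0 < y → Ginv i y = 0)
    (Q : Fin K → ℝ → ℝ)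
    (hQ : ∀ i u, Q i u = Ginv i (β k * P k / (β i * P i) * G k u))
    (R : Fin K → Ω → ℝ)
    (hRmeas : ∀ i, Measurable (R i)) (hRnn : ∀ i ω, 0 ≤ R i ω)
    (hRindep : iIndepFun R ℙ)
    (hsurv : ∀ i, ∀ r : ℝ, 0 ≤ r →
      ℙ {ω | r ≤ R i ω} = ENNReal.ofReal (Real.exp (-(Real.pi * lam i * r ^ 2)))) :
    (ℙ {ω | ∀ i, i ≠ k →
        β i * P i * G i (R i ω) ≤ β k * P k * G k (R k ω)}).toReal =
      2 * Real.pi * lam k * ∫ u in Set.Ioi (0 : ℝ),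
        u * Real.exp (-(Real.pi * lam k * u ^ 2)) *
          ∏ i ∈ Finset.univ.erase k, Real.exp (-(Real.pi * lam i * (Q i u) ^ 2)) := by
  refine (barss_association_probability_homogeneous_general k hβ hP hGcont
    (fun i x hx y _ hxy => hGanti i x y hx hxy) (hGpos k) hGlim
    (fun i => ⟨hGinv1 i, hGinv2 i⟩) hQ hRmeas hRnn hRindep hsurv
    (hasDerivAt_const_mul_sq _ 0).continuousAt.continuousWithinAt
    fun u _ => hasDerivAt_const_mul_sq _ u).trans ?_
  simp only [← integral_const_mul, mul_assoc]
end
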